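/- Let (X,d) be a bicomplete T0-quasi-metric space and J : X → X a single-valued map continuous with respect to d^s such that r·d(x,y) ≤ d(Jx,Jy) for all x,y ∈ X, for some constant r > 0. Let F : X → CB(X) be a set-valued map satisfying H(Fx,Fy) ≤ α·[d(Jx,Fx) + d(Jy,Fy)] for all x,y ∈ X, where α ∈ (0,1/2). Then there exists a unique x₀ ∈ X which is both a startpoint and an endpoint of J and F (i.e. H({Jx₀},Fx₀) = 0 = H(Fx₀,{Jx₀})) if and only if J and F have the approximate mix-point property, i.e. inf_{x∈X} sup_{y∈Fx} d^s(Jx,y) = 0. -/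

import Mathlib

open Set Filter
open scoped ENNReal

noncomputable section

/-- The symmetrization `d^s(x,y) = max (d x y) (d y x)` of a quasi-pseudometric. -/
def symm2 {X : Type*} (d : X → X → ℝ) (x y : X) : ℝ := max (d x y) (d y x)

/-- The (extended) Hausdorff-type distance
`H(A,B) = max (sup_{a∈A} inf_{b∈B} d a b) (sup_{b∈B} inf_{a∈A} d a b)`. -/
def qH {X : Type*} (d : X → X → ℝ) (A B : Set X) : ℝ≥0∞ :=
  max (⨆ a ∈ A, ⨅ b ∈ B, ENNReal.ofReal (d a b))
      (⨆ b ∈ B, ⨅ a ∈ A, ENNReal.ofReal (d a b))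

/-- Distance from a point to a set: `d(x,A) = inf_{a∈A} d x a`. -/
def dPS {X : Type*} (d : X → X → ℝ) (x : X) (A : Set X) : ℝ≥0∞ :=
  ⨅ a ∈ A, ENNReal.ofReal (d x a)

/-- Distance from a set to a point: `d(A,x) = inf_{a∈A} d a x`. -/
def dSP {X : Type*} (d : X → X → ℝ) (A : Set X) (x : X) : ℝ≥0∞ :=
  ⨅ a ∈ A, ENNReal.ofReal (d a x)

/-!
Write `e x` for the radius `sup_{y ∈ F x} d^s(J x, y)`; the common start- and endpoints of `J` and
`F` are the zeros of `e`. The contraction gives `d^s(J x, J y) ≤ (1 + α) (e x + e y)`, so, `J` being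
expansive, `d^s(x, y)` is bounded by a multiple of `e x + e y`. Hence zeros of `e` are unique, and a
sequence along which `e` tends to `0` is Cauchy. At its limit `l`, continuity of `J` and the
contraction give `e l ≤ α d(J l, F l) ≤ α e l`; as `d(J l, F l)` is finite, it vanishes and so does
`e l`.
-/

/-- The symmetrized radius `sup_{b ∈ A} d^s(a,b)` of `A` as seen from `a`. The approximate mix-point
property says that `symmRadius d (J x) (F x)` has infimum `0`. -/
def symmRadius {X : Type*} (d : X → X → ℝ) (a : X) (A : Set X) : ℝ≥0∞ :=
  ⨆ b ∈ A, ENNReal.ofReal (symm2 d a b)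

section Symmetrization

variable {X : Type*} {d : X → X → ℝ}

theorem symm2_comm (x y : X) : symm2 d x y = symm2 d y x := max_comm _ _

theorem ofReal_symm2 (x y : X) :
    ENNReal.ofReal (symm2 d x y) = max (ENNReal.ofReal (d x y)) (ENNReal.ofReal (d y x)) :=
  ENNReal.ofReal_max _ _

theorem symm2_le_inv_mul_symm2_of_expansive {Y : Type*} {d' : Y → Y → ℝ} {J : X → Y} {r : ℝ}
    (hr : 0 < r) (hJ : ∀ x y, r * d x y ≤ d' (J x) (J y)) (x y : X) :
    symm2 d x y ≤ r⁻¹ * symm2 d' (J x) (J y) :=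
  max_le ((le_inv_mul_iff₀ hr).2 <| (hJ x y).trans <| le_max_left _ _)
    ((le_inv_mul_iff₀ hr).2 <| (hJ y x).trans <| le_max_right _ _)

theorem eq_of_symm2_nonpos (h_nonneg : ∀ x y, 0 ≤ d x y)
    (h_T0 : ∀ x y, d x y = 0 → d y x = 0 → x = y) {x y : X} (h : symm2 d x y ≤ 0) : x = y :=
  h_T0 x y ((le_max_left _ _).trans h |>.antisymm (h_nonneg x y))
    ((le_max_right _ _).trans h |>.antisymm (h_nonneg y x))

end Symmetrization

section Radius

variable {X : Type*} {d : X → X → ℝ} {a b x : X} {A B : Set X}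

theorem ofReal_symm2_le_symmRadius (hb : b ∈ A) :
    ENNReal.ofReal (symm2 d a b) ≤ symmRadius d a A :=
  le_iSup₂ (f := fun b _ ↦ ENNReal.ofReal (symm2 d a b)) b hb

theorem ofReal_le_symmRadius (hb : b ∈ A) : ENNReal.ofReal (d a b) ≤ symmRadius d a A :=
  (ENNReal.ofReal_le_ofReal (le_max_left _ _)).trans (ofReal_symm2_le_symmRadius hb)

theorem ofReal_swap_le_symmRadius (hb : b ∈ A) : ENNReal.ofReal (d b a) ≤ symmRadius d a A :=
  (ENNReal.ofReal_le_ofReal (le_max_right _ _)).trans (ofReal_symm2_le_symmRadius hb)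

theorem dPS_lt_top (hA : A.Nonempty) : dPS d x A < ⊤ :=
  hA.elim fun a ha ↦ (iInf₂_le a ha).trans_lt ENNReal.ofReal_lt_top

theorem dPS_le_symmRadius (hA : A.Nonempty) : dPS d x A ≤ symmRadius d x A :=
  hA.elim fun a ha ↦ (iInf₂_le a ha).trans (ofReal_le_symmRadius ha)

theorem dPS_le_qH (ha : a ∈ A) : dPS d a B ≤ qH d A B :=
  (le_iSup₂ (f := fun a _ ↦ dPS d a B) a ha).trans (le_max_left _ _)

theorem dSP_le_qH (hb : b ∈ B) : dSP d A b ≤ qH d A B :=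
  (le_iSup₂ (f := fun b _ ↦ dSP d A b) b hb).trans (le_max_right _ _)

theorem qH_singleton_left (hA : A.Nonempty) :
    qH d {a} A = ⨆ b ∈ A, ENNReal.ofReal (d a b) := by
  obtain ⟨b, hb⟩ := hA
  have h_inf_le : (⨅ b ∈ A, ENNReal.ofReal (d a b)) ≤ ⨆ b ∈ A, ENNReal.ofReal (d a b) :=
    (iInf₂_le b hb).trans (le_iSup₂ (f := fun b _ ↦ ENNReal.ofReal (d a b)) b hb)
  simpa only [qH, iSup_singleton, iInf_singleton] using max_eq_right h_inf_le

theorem qH_singleton_right (hA : A.Nonempty) :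
    qH d A {a} = ⨆ b ∈ A, ENNReal.ofReal (d b a) :=
  (max_comm _ _).trans (qH_singleton_left (d := fun x y ↦ d y x) hA)

theorem max_qH_singleton (hA : A.Nonempty) :
    max (qH d {a} A) (qH d A {a}) = symmRadius d a A := by
  simp only [qH_singleton_left hA, qH_singleton_right hA, symmRadius, ofReal_symm2, ← iSup_sup_eq]

theorem qH_singleton_eq_zero_iff (hA : A.Nonempty) :
    qH d {a} A = 0 ∧ qH d A {a} = 0 ↔ symmRadius d a A = 0 := by
  simp only [← max_qH_singleton hA, ← nonpos_iff_eq_zero, max_le_iff]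

end Radius

section TriangleInequality

variable {X : Type*} {d : X → X → ℝ} {a b x : X} {A B : Set X}
  (h_tri : ∀ x y z, d x z ≤ d x y + d y z)
include h_tri

theorem ofReal_le_ofReal_add_ofReal (x y z : X) :
    ENNReal.ofReal (d x z) ≤ ENNReal.ofReal (d x y) + ENNReal.ofReal (d y z) :=
  (ENNReal.ofReal_le_ofReal (h_tri x y z)).trans ENNReal.ofReal_add_le

theorem ofReal_le_dPS_add_symmRadius :
    ENNReal.ofReal (d x a) ≤ dPS d x A + symmRadius d a A := by
  rw [dPS, ENNReal.iInf₂_add]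
  refine le_iInf₂ fun y hy ↦ (ofReal_le_ofReal_add_ofReal h_tri x y a).trans ?_
  gcongr
  exact ofReal_swap_le_symmRadius hy

theorem ofReal_le_symmRadius_add_dSP :
    ENNReal.ofReal (d a x) ≤ symmRadius d a A + dSP d A x := by
  rw [dSP, ENNReal.add_iInf₂]
  refine le_iInf₂ fun y hy ↦ (ofReal_le_ofReal_add_ofReal h_tri a y x).trans ?_
  gcongr
  exact ofReal_le_symmRadius hy

theorem ofReal_le_symmRadius_add_qH_add_symmRadius (hA : A.Nonempty) :
    ENNReal.ofReal (d a b) ≤ symmRadius d a A + qH d A B + symmRadius d b B := by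
  obtain ⟨p, hp⟩ := hA
  calc ENNReal.ofReal (d a b)
    _ ≤ ENNReal.ofReal (d a p) + ENNReal.ofReal (d p b) := ofReal_le_ofReal_add_ofReal h_tri a p b
    _ ≤ symmRadius d a A + (dPS d p B + symmRadius d b B) := by
      gcongr
      exacts [ofReal_le_symmRadius hp, ofReal_le_dPS_add_symmRadius h_tri]
    _ ≤ symmRadius d a A + qH d A B + symmRadius d b B := by
      rw [← add_assoc]
      gcongr
      exact dPS_le_qH hp

theorem symmRadius_le_symm2_add_symmRadius_add_qH :
    symmRadius d b B ≤
      ENNReal.ofReal (symm2 d b a) + symmRadius d a A + max (qH d A B) (qH d B A) := by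
  refine iSup₂_le fun y hy ↦ ?_
  rw [ofReal_symm2 b y]
  refine max_le ?_ ?_
  · calc ENNReal.ofReal (d b y)
      _ ≤ ENNReal.ofReal (d b a) + ENNReal.ofReal (d a y) := ofReal_le_ofReal_add_ofReal h_tri b a y
      _ ≤ ENNReal.ofReal (symm2 d b a) + (symmRadius d a A + max (qH d A B) (qH d B A)) := by
        gcongr
        · exact le_max_left _ _
        · exact (ofReal_le_symmRadius_add_dSP h_tri).trans
            (add_le_add_right ((dSP_le_qH hy).trans (le_max_left _ _)) _)
      _ = _ := (add_assoc _ _ _).symm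
  · calc ENNReal.ofReal (d y b)
      _ ≤ ENNReal.ofReal (d y a) + ENNReal.ofReal (d a b) := ofReal_le_ofReal_add_ofReal h_tri y a b
      _ ≤ (max (qH d A B) (qH d B A) + symmRadius d a A) + ENNReal.ofReal (symm2 d b a) := by
        gcongr
        · exact (ofReal_le_dPS_add_symmRadius h_tri).trans
            (add_le_add_left ((dPS_le_qH hy).trans (le_max_right _ _)) _)
        · exact le_max_right _ _
      _ = _ := by ring

end TriangleInequality

section KannanContraction

variable {X Y : Type*} {d : Y → Y → ℝ} {J : X → Y} {F : X → Set Y} {α : ℝ≥0∞}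
  (h_tri : ∀ x y z, d x z ≤ d x y + d y z)
  (hF : ∀ x, (F x).Nonempty)
  (h_contr : ∀ x y, qH d (F x) (F y) ≤ α * (dPS d (J x) (F x) + dPS d (J y) (F y)))
include h_tri hF h_contr

theorem ofReal_symm2_le_mul_symmRadius_add (x y : X) :
    ENNReal.ofReal (symm2 d (J x) (J y)) ≤
      (1 + α) * (symmRadius d (J x) (F x) + symmRadius d (J y) (F y)) := by
  have h_dist (x y : X) : ENNReal.ofReal (d (J x) (J y)) ≤
      (1 + α) * (symmRadius d (J x) (F x) + symmRadius d (J y) (F y)) :=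
    calc ENNReal.ofReal (d (J x) (J y))
      _ ≤ symmRadius d (J x) (F x) + qH d (F x) (F y) + symmRadius d (J y) (F y) :=
        ofReal_le_symmRadius_add_qH_add_symmRadius h_tri (hF x)
      _ ≤ symmRadius d (J x) (F x) +
          α * (symmRadius d (J x) (F x) + symmRadius d (J y) (F y)) +
          symmRadius d (J y) (F y) := by
        gcongr
        exact (h_contr x y).trans (mul_le_mul_right (add_le_add (dPS_le_symmRadius (hF x))
          (dPS_le_symmRadius (hF y))) α)
      _ = _ := by ring
  rw [ofReal_symm2]
  exact max_le (h_dist x y) ((h_dist y x).trans_eq (by rw [add_comm (symmRadius d (J y) (F y))]))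

theorem ofReal_symm2_le_of_expansive {d' : X → X → ℝ} {r : ℝ} (hr : 0 < r)
    (hJ : ∀ x y, r * d' x y ≤ d (J x) (J y)) (x y : X) :
    ENNReal.ofReal (symm2 d' x y) ≤
      ENNReal.ofReal r⁻¹ * (1 + α) * (symmRadius d (J x) (F x) + symmRadius d (J y) (F y)) :=
  calc ENNReal.ofReal (symm2 d' x y)
    _ ≤ ENNReal.ofReal (r⁻¹ * symm2 d (J x) (J y)) :=
      ENNReal.ofReal_le_ofReal (symm2_le_inv_mul_symm2_of_expansive hr hJ x y)
    _ = ENNReal.ofReal r⁻¹ * ENNReal.ofReal (symm2 d (J x) (J y)) :=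
      ENNReal.ofReal_mul (inv_pos.2 hr).le
    _ ≤ ENNReal.ofReal r⁻¹ *
        ((1 + α) * (symmRadius d (J x) (F x) + symmRadius d (J y) (F y))) := by
      gcongr
      exact ofReal_symm2_le_mul_symmRadius_add h_tri hF h_contr x y
    _ = _ := (mul_assoc _ _ _).symm

theorem symmRadius_le_add_mul_dPS (x y : X) :
    symmRadius d (J y) (F y) ≤ ENNReal.ofReal (symm2 d (J y) (J x)) + symmRadius d (J x) (F x) +
      α * (symmRadius d (J x) (F x) + dPS d (J y) (F y)) := by
  refine (symmRadius_le_symm2_add_symmRadius_add_qH h_tri (a := J x) (A := F x)).trans ?_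
  gcongr
  refine max_le ((h_contr x y).trans ?_) ((h_contr y x).trans_eq (by rw [add_comm]) |>.trans ?_)
  all_goals
    gcongr
    exact dPS_le_symmRadius (hF x)

theorem symmRadius_eq_zero_of_tendsto (hα : α < 1) {u : ℕ → X} {l : X}
    (h_rad : Tendsto (fun n ↦ symmRadius d (J (u n)) (F (u n))) atTop (nhds 0))
    (h_lim : Tendsto (fun n ↦ ENNReal.ofReal (symm2 d (J l) (J (u n)))) atTop (nhds 0)) :
    symmRadius d (J l) (F l) = 0 := by
  have h_le : symmRadius d (J l) (F l) ≤ α * dPS d (J l) (F l) := by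
    have h_bound := (h_lim.add h_rad).add <|
      ENNReal.Tendsto.const_mul (h_rad.add_const (dPS d (J l) (F l))) (.inr hα.ne_top)
    simp only [zero_add] at h_bound
    exact ge_of_tendsto' h_bound fun n ↦ symmRadius_le_add_mul_dPS h_tri hF h_contr (u n) l
  have h_dPS : dPS d (J l) (F l) = 0 := by
    by_contra h_ne
    refine ((dPS_le_symmRadius (hF l)).trans h_le).not_gt ?_
    simpa only [one_mul] using ENNReal.mul_lt_mul_left h_ne (dPS_lt_top (hF l)).ne hα
  simpa only [h_dPS, mul_zero, nonpos_iff_eq_zero] using h_le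

end KannanContraction

section Convergence

theorem tendsto_ofReal_nhds_zero_iff {ι : Type*} {f : Filter ι} {s : ι → ℝ} :
    Tendsto (fun i ↦ ENNReal.ofReal (s i)) f (nhds 0) ↔ ∀ ε > 0, ∀ᶠ i in f, s i < ε := by
  refine ⟨fun h ε hε ↦ ?_, fun h ↦ ENNReal.tendsto_nhds_zero.2 fun ε hε ↦ ?_⟩
  · filter_upwards [h.eventually_lt_const (ENNReal.ofReal_pos.2 hε)] with i hi
    exact (ENNReal.ofReal_lt_ofReal_iff hε).1 hi
  · obtain ⟨δ, hδ, hδε⟩ := ENNReal.lt_iff_exists_nnreal_btwn.1 hε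
    filter_upwards [h δ (by exact_mod_cast hδ)] with i hi
    exact (ENNReal.ofReal_le_ofReal hi.le).trans (by simpa using hδε.le)

variable {X : Type*} {d : X → X → ℝ}

theorem cauchy_of_tendsto_zero {e : X → ℝ≥0∞} {C : ℝ≥0∞} (hC : C ≠ ⊤)
    (h_dist : ∀ x y, ENNReal.ofReal (symm2 d x y) ≤ C * (e x + e y)) {u : ℕ → X}
    (hu : Tendsto (fun n ↦ e (u n)) atTop (nhds 0)) :
    ∀ ε > 0, ∃ N, ∀ m ≥ N, ∀ n ≥ N, symm2 d (u m) (u n) < ε := by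
  have h_bound : Tendsto (fun p : ℕ × ℕ ↦ C * (e (u p.1) + e (u p.2))) atTop (nhds 0) := by
    rw [← prod_atTop_atTop_eq]
    simpa only [add_zero, mul_zero, Function.comp_def] using ENNReal.Tendsto.const_mul
      ((hu.comp tendsto_fst).add (hu.comp tendsto_snd)) (.inr hC)
  have h_tendsto : Tendsto (fun p : ℕ × ℕ ↦ ENNReal.ofReal (symm2 d (u p.1) (u p.2)))
      atTop (nhds 0) :=
    tendsto_of_tendsto_of_tendsto_of_le_of_le tendsto_const_nhds h_bound
      (fun _ ↦ zero_le) fun _ ↦ h_dist _ _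
  intro ε hε
  obtain ⟨N, hN⟩ := eventually_atTop_prod_self.1 (tendsto_ofReal_nhds_zero_iff.1 h_tendsto ε hε)
  exact ⟨N, fun m hm n hn ↦ hN m n hm hn⟩

theorem tendsto_ofReal_symm2_map {Y : Type*} {d' : Y → Y → ℝ} {J : X → Y} {l : X}
    (hJ : ∀ ε > 0, ∃ δ > 0, ∀ y, symm2 d l y < δ → symm2 d' (J l) (J y) < ε) {u : ℕ → X}
    (hu : ∀ ε > 0, ∃ N, ∀ n ≥ N, symm2 d (u n) l < ε) :
    Tendsto (fun n ↦ ENNReal.ofReal (symm2 d' (J l) (J (u n)))) atTop (nhds 0) := by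
  refine tendsto_ofReal_nhds_zero_iff.2 fun ε hε ↦ ?_
  obtain ⟨δ, hδ, h_map⟩ := hJ ε hε
  filter_upwards [eventually_atTop.2 (hu δ hδ)] with n hn
  exact h_map (u n) (symm2_comm (d := d) (u n) l ▸ hn)

theorem exists_seq_tendsto_iInf {ι R : Type*} [Nonempty ι] [ConditionallyCompleteLinearOrder R]
    [TopologicalSpace R] [OrderTopology R] [FirstCountableTopology R] {e : ι → R}
    (he : BddBelow (range e)) :
    ∃ u : ℕ → ι, Tendsto (fun n ↦ e (u n)) atTop (nhds (⨅ i, e i)) := by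
  obtain ⟨v, -, hv, h_mem⟩ := exists_seq_tendsto_sInf (range_nonempty e) he
  choose u hu using h_mem
  exact ⟨u, by simpa only [hu, sInf_range] using hv⟩

end Convergence

theorem stmt8_general {X Y : Type*} [Nonempty X]
    (d : X → X → ℝ)
    (hd_nonneg : ∀ x y : X, 0 ≤ d x y)
    (hd_T0 : ∀ x y : X, d x y = 0 → d y x = 0 → x = y)
    (hbicomplete : ∀ u : ℕ → X,
      (∀ ε : ℝ, 0 < ε → ∃ N : ℕ, ∀ m ≥ N, ∀ n ≥ N, symm2 d (u m) (u n) < ε) →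
      ∃ l : X, ∀ ε : ℝ, 0 < ε → ∃ N : ℕ, ∀ n ≥ N, symm2 d (u n) l < ε)
    (d' : Y → Y → ℝ)
    (hd'_tri : ∀ x y z : Y, d' x z ≤ d' x y + d' y z)
    (J : X → Y)
    (hJ_cont : ∀ x : X, ∀ ε : ℝ, 0 < ε → ∃ δ : ℝ, 0 < δ ∧
      ∀ y : X, symm2 d x y < δ → symm2 d' (J x) (J y) < ε)
    (r : ℝ) (hr : 0 < r)
    (hJ_exp : ∀ x y : X, r * d x y ≤ d' (J x) (J y))
    (F : X → Set Y)
    (hF_ne : ∀ x : X, (F x).Nonempty)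
    (α : ℝ≥0∞) (hα : α < 1)
    (hcontr : ∀ x y : X,
      qH d' (F x) (F y) ≤ α * (dPS d' (J x) (F x) + dPS d' (J y) (F y))) :
    (∃! x₀ : X, qH d' {J x₀} (F x₀) = 0 ∧ qH d' (F x₀) {J x₀} = 0) ↔
      (⨅ x : X, ⨆ y ∈ F x, ENNReal.ofReal (symm2 d' (J x) y)) = 0 := by
  let e (x : X) := symmRadius d' (J x) (F x)
  change _ ↔ ⨅ x, e x = 0
  have h_zero (x : X) : qH d' {J x} (F x) = 0 ∧ qH d' (F x) {J x} = 0 ↔ e x = 0 :=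
    qH_singleton_eq_zero_iff (hF_ne x)
  have h_dist (x y : X) :
      ENNReal.ofReal (symm2 d x y) ≤ ENNReal.ofReal r⁻¹ * (1 + α) * (e x + e y) :=
    ofReal_symm2_le_of_expansive hd'_tri hF_ne hcontr hr hJ_exp x y
  have h_unique {x y : X} (hx : e x = 0) (hy : e y = 0) : x = y :=
    eq_of_symm2_nonpos hd_nonneg hd_T0 <| ENNReal.ofReal_eq_zero.1 <| nonpos_iff_eq_zero.1 <| by
      simpa only [hx, hy, add_zero, mul_zero] using h_dist x y
  simp only [h_zero]
  refine ⟨fun ⟨x, hx, _⟩ ↦ nonpos_iff_eq_zero.1 (hx ▸ iInf_le e x), fun h_inf ↦ ?_⟩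
  obtain ⟨u, hu⟩ := exists_seq_tendsto_iInf (OrderBot.bddBelow (range e))
  rw [h_inf] at hu
  have hC : ENNReal.ofReal r⁻¹ * (1 + α) ≠ ⊤ := by finiteness [hα.ne_top]
  obtain ⟨l, hl⟩ := hbicomplete u (cauchy_of_tendsto_zero hC h_dist hu)
  have hl_zero : e l = 0 := symmRadius_eq_zero_of_tendsto hd'_tri hF_ne hcontr hα hu
    (tendsto_ofReal_symm2_map (hJ_cont l) hl)
  exact ⟨l, hl_zero, fun y hy ↦ h_unique hy hl_zero⟩

theorem stmt8 {X : Type*} [Nonempty X]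
    (d : X → X → ℝ)
    (hd_nonneg : ∀ x y : X, 0 ≤ d x y)
    (hd_refl : ∀ x : X, d x x = 0)
    (hd_tri : ∀ x y z : X, d x z ≤ d x y + d y z)
    (hd_T0 : ∀ x y : X, d x y = 0 → d y x = 0 → x = y)
    (hbicomplete : ∀ u : ℕ → X,
      (∀ ε : ℝ, 0 < ε → ∃ N : ℕ, ∀ m ≥ N, ∀ n ≥ N, symm2 d (u m) (u n) < ε) →
      ∃ l : X, ∀ ε : ℝ, 0 < ε → ∃ N : ℕ, ∀ n ≥ N, symm2 d (u n) l < ε)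
    (J : X → X)
    (hJ_cont : ∀ x : X, ∀ ε : ℝ, 0 < ε → ∃ δ : ℝ, 0 < δ ∧
      ∀ y : X, symm2 d x y < δ → symm2 d (J x) (J y) < ε)
    (r : ℝ) (hr : 0 < r)
    (hJ_exp : ∀ x y : X, r * d x y ≤ d (J x) (J y))
    (F : X → Set X)
    (hF_ne : ∀ x : X, (F x).Nonempty)
    (hF_bdd : ∀ x : X, ∃ M : ℝ, ∀ a ∈ F x, ∀ c ∈ F x, symm2 d a c ≤ M)
    (hF_closed : ∀ x : X, ∀ u : ℕ → X, (∀ n : ℕ, u n ∈ F x) → ∀ l : X,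
      Filter.Tendsto (fun n => symm2 d (u n) l) Filter.atTop (nhds (0 : ℝ)) → l ∈ F x)
    (α : ℝ) (hα0 : 0 < α) (hα1 : α < 1 / 2)
    (hcontr : ∀ x y : X, qH d (F x) (F y) ≤ ENNReal.ofReal α * (dPS d (J x) (F x) + dPS d (J y) (F y)))
    :
    (∃! x₀ : X, qH d {J x₀} (F x₀) = 0 ∧ qH d (F x₀) {J x₀} = 0) ↔ (⨅ x : X, ⨆ y ∈ F x, ENNReal.ofReal (symm2 d (J x) y)) = 0 := by
  exact stmt8_general d hd_nonneg hd_T0 hbicomplete d hd_tri J hJ_cont r hr hJ_exp F hF_ne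
    (ENNReal.ofReal α) (ENNReal.ofReal_lt_one.2 (by linarith)) hcontr
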